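/- arXiv:math/0206138 — 3 statements merged into one kernel-verified Lean document; each statement's English description precedes it below -/
import Mathlib

section
/- Let G be a set with a binary operation · satisfying left cancellation (for all a, b, c in G, a·b = a·c implies b = c). If G satisfies the identities (y·z)·(x·x) = (y·x)·(z·x) and (x·(x·x))·(u·v) = (x·u)·((x·x)·v) for all elements, then G also satisfies the identity (x·x)·(y·z) = (x·y)·(x·z) for all elements. -/
theorem stmt_0 {G : Type*} [Mul G]
    (hcancel : ∀ a b c : G, a * b = a * c → b = c)
    (h2 : ∀ x y z : G, (y * z) * (x * x) = (y * x) * (z * x))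
    (h3 : ∀ x u v : G, (x * (x * x)) * (u * v) = (x * u) * ((x * x) * v)) :
    ∀ x y z : G, (x * x) * (y * z) = (x * y) * (x * z) := by
  intro x y z
  -- Multiplying on the left by `x * (x * z)` brings the left side into the shape of `h3`,
  -- and the right side into the shape of `h2` at the element `x * z`.
  apply hcancel (x * (x * z))
  calc (x * (x * z)) * ((x * x) * (y * z))
      = (x * (x * x)) * ((x * z) * (y * z)) := (h3 x (x * z) (y * z)).symm
    _ = (x * (x * x)) * ((x * y) * (z * z)) := by rw [h2 z x y]
    _ = (x * (x * y)) * ((x * x) * (z * z)) := h3 x (x * y) (z * z)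
    _ = (x * (x * y)) * ((x * z) * (x * z)) := by rw [h2 z x x]
    _ = (x * (x * z)) * ((x * y) * (x * z)) := h2 (x * z) x (x * y)
end

section
/- Let G be a set with a binary operation · satisfying the identities (y·z)·(x·x) = (y·x)·(z·x) and (x·(x·x))·(u·v) = (x·u)·((x·x)·v) for all elements. Then for all x, y, z in G one has (x·(x·z))·((x·x)·(y·z)) = (x·(x·z))·((x·y)·(x·z)). -/
theorem stmt_1 {G : Type*} [Mul G]
    (h2 : ∀ x y z : G, (y * z) * (x * x) = (y * x) * (z * x))
    (h3 : ∀ x u v : G, (x * (x * x)) * (u * v) = (x * u) * ((x * x) * v)) :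
    ∀ x y z : G, (x * (x * z)) * ((x * x) * (y * z)) = (x * (x * z)) * ((x * y) * (x * z)) := by
  intro x y z
  calc (x * (x * z)) * ((x * x) * (y * z))
      = (x * (x * x)) * ((x * z) * (y * z)) := (h3 x (x * z) (y * z)).symm
    _ = (x * (x * x)) * ((x * y) * (z * z)) := by rw [h2 z x y]
    _ = (x * (x * y)) * ((x * x) * (z * z)) := h3 x (x * y) (z * z)
    _ = (x * (x * y)) * ((x * z) * (x * z)) := by rw [h2 z x x]
    _ = (x * (x * z)) * ((x * y) * (x * z)) := h2 (x * z) x (x * y)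
end

section
/- A quasigroup Q is trimedial if and only if it satisfies the two identities (y·z)·(x·x) = (y·x)·(z·x) and (x·(x·x))·(u·v) = (x·u)·((x·x)·v) for all elements of Q. -/
/-!
Write `P w x y z` for the instance `(w * x) * (y * z) = (w * y) * (x * z)` of mediality, `(R)` for
`(y * z) * (x * x) = (y * x) * (z * x)`, `(T)` for `(x * (x * x)) * (u * v) = (x * u) * ((x * x) * v)`
and `(D)` for the mirror image `(x * x) * (y * z) = (x * y) * (x * z)` of `(R)`.

Both identities are instances of mediality in three variables, so they hold in a trimedial
quasigroup. For the converse: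

* `(R)` and `(T)` imply `(D)` (`left_semimedial`). With `(R)` and `(D)` one gets
  `(x * y) * (z * x) = (x * z) * (y * x)` (`outer_medial`), so `P` holds as soon as two of its
  four arguments coincide.
* Under `(R)` and `(D)`, `P a b c d` is equivalent to the closure of a Thomsen configuration:
  `a * s = b * d` and `t * d = a * c` force `t * s = b * c` (`thomsen_iff`). From this,
  `P` is invariant under all permutations of its arguments (`medial_swap_right` and its mirror
  image `medial_swap_left`).
* `P a b c d` says that `d` is a fixed point of the permutation
  `μ = (L_b⁻¹ L_a) (L_c⁻¹ L_b) (L_a⁻¹ L_c)`. By `(D)`, `μ u * μ v = μ' (u * v)`, where `μ'` is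
  built in the same way from the translations by `a * a`, `b * b`, `c * c`. By `(T)` and `(D)` the
  maps `L_x⁻¹ L_{x * x}` commute with every `L_u⁻¹ L_v`, hence `μ' = μ`. So the fixed points of `μ`
  are closed under multiplication (`medial_mul`).

Consequently `P`, which holds on `{a, b, c}` because four elements of a three-element set cannot be
distinct, extends to the closure of `{a, b, c}` one argument at a time.
-/

/-- A quasigroup structure on a type: a binary operation whose left and right
translations are bijections. -/
def IsQuasigroup (Q : Type*) [Mul Q] : Prop :=
  (∀ a : Q, Function.Bijective fun x : Q => a * x) ∧
  (∀ a : Q, Function.Bijective fun x : Q => x * a)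

/-- A quasigroup is trimedial if every subgroupoid generated by three elements is
medial, i.e. satisfies (w·x)·(y·z) = (w·y)·(x·z). -/
def IsTrimedial (Q : Type*) [Mul Q] : Prop :=
  ∀ a b c : Q, ∀ w x y z : Q,
    w ∈ Subsemigroup.closure {a, b, c} → x ∈ Subsemigroup.closure {a, b, c} →
    y ∈ Subsemigroup.closure {a, b, c} → z ∈ Subsemigroup.closure {a, b, c} →
    (w * x) * (y * z) = (w * y) * (x * z)

namespace Trimedial

variable {Q : Type*} [Mul Q]

/-! ### Solving equations in a quasigroup -/

theorem cancel_left (hQ : IsQuasigroup Q) {a x y : Q} (h : a * x = a * y) : x = y :=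
  (hQ.1 a).1 h

theorem cancel_right (hQ : IsQuasigroup Q) {a x y : Q} (h : x * a = y * a) : x = y :=
  (hQ.2 a).1 h

theorem exists_mul_eq (hQ : IsQuasigroup Q) (a b : Q) : ∃ x, a * x = b :=
  (hQ.1 a).2 b

theorem exists_mul_eq' (hQ : IsQuasigroup Q) (a b : Q) : ∃ x, x * a = b :=
  (hQ.2 a).2 b

/-- Right semimediality, the identity `(R)`. -/
def RightSemimedial (Q : Type*) [Mul Q] : Prop :=
  ∀ x y z : Q, (y * z) * (x * x) = (y * x) * (z * x)

/-- Left semimediality, the identity `(D)`. -/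
def LeftSemimedial (Q : Type*) [Mul Q] : Prop :=
  ∀ x y z : Q, (x * x) * (y * z) = (x * y) * (x * z)

/-- The identity `(T)`. -/
def CubeIdentity (Q : Type*) [Mul Q] : Prop :=
  ∀ x u v : Q, (x * (x * x)) * (u * v) = (x * u) * ((x * x) * v)

/-- The instance of mediality at `w, x, y, z`. -/
def P (w x y z : Q) : Prop := (w * x) * (y * z) = (w * y) * (x * z)

/-! ### Left semimediality -/

/-- The medial law at `u, w, v, u * v`. -/
theorem medial_product (hQ : IsQuasigroup Q) (hR : RightSemimedial Q) (hT : CubeIdentity Q)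
    {u v x : Q} (w : Q) (hx : u * v = x) : (u * w) * (v * x) = x * (w * x) := by
  -- multiply both sides by `(x * x) * (v * x)` on the right
  apply cancel_right hQ (a := (x * x) * (v * x))
  rw [← hR (v * x) (u * w) (x * x), hR x u w, hR (v * x) (u * x) (w * x), ← hR x u v, hx, hT]

theorem mul_eq_mul_of_right_unit (hQ : IsQuasigroup Q) (hR : RightSemimedial Q)
    (hT : CubeIdentity Q) {u v w x e g : Q} (hx : u * v = x) (he : e * x = x)
    (hg : g * x = u * w) : e * w = g * v := by
  apply cancel_right hQ (a := x * x)
  rw [hR, hR, he, hg, medial_product hQ hR hT w hx]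

theorem mul_mul_eq_of_right_unit (hQ : IsQuasigroup Q) (hR : RightSemimedial Q)
    (hT : CubeIdentity Q) {y z e g : Q} (X : Q) (he : e * z = z) (hg : g * z = y) :
    (X * g) * z = (X * e) * y := by
  obtain ⟨v, hv⟩ := exists_mul_eq hQ (X * X) z
  obtain ⟨w, hw⟩ := exists_mul_eq hQ (X * X) y
  have h := mul_eq_mul_of_right_unit hQ hR hT hv he (hg.trans hw.symm)
  calc (X * g) * z = (X * (X * X)) * (g * v) := by rw [hT, hv]
    _ = (X * e) * y := by rw [← h, hT, hw]

theorem left_semimedial (hQ : IsQuasigroup Q) (hR : RightSemimedial Q) (hT : CubeIdentity Q) :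
    LeftSemimedial Q := by
  intro x y z
  obtain ⟨v, hv⟩ := exists_mul_eq' hQ x z
  obtain ⟨X, hX⟩ := exists_mul_eq' hQ v x
  obtain ⟨g, hg⟩ := exists_mul_eq' hQ x y
  obtain ⟨e, he⟩ := exists_mul_eq' hQ x x
  have hXg := medial_product hQ hR hT g hX
  have hXe := medial_product hQ hR hT e hX
  rw [hv, hg] at hXg
  rw [hv, he] at hXe
  have h := mul_mul_eq_of_right_unit hQ hR hT X he hg
  rw [← hXe, ← hR, ← h, hR, hXg]

/-! ### Consequences of the two semimedial laws -/

/-- The Thomsen closure condition in which one row and one column carry the same element `a`. -/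
theorem thomsen_square (hQ : IsQuasigroup Q) (hR : RightSemimedial Q) (hD : LeftSemimedial Q)
    {a p t s n : Q} (h₁ : p * a = t * s) (h₂ : t * n = a * a) : p * n = a * s := by
  obtain ⟨g, hg⟩ := exists_mul_eq' hQ n (a * s)
  have h : g * a = p * a := by
    rw [h₁]
    apply cancel_right hQ (a := n * n)
    rw [hR, hg, hR, h₂, hD]
  rw [← cancel_right hQ h, hg]

theorem mul_mul_of_eq (hQ : IsQuasigroup Q) (hR : RightSemimedial Q) (hD : LeftSemimedial Q)
    {p y q z x : Q} (h₁ : p * y = x) (h₂ : q * z = x) : (p * q) * (y * z) = x * x := by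
  obtain ⟨k, hk⟩ := exists_mul_eq' hQ (y * z) (x * x)
  obtain ⟨s, hs⟩ := exists_mul_eq hQ k ((p * p) * x)
  have h := thomsen_square hQ hR hD hs.symm hk
  -- comparing `(p * p) * (y * z) = x * s` with `(p * y) * (p * z)` identifies `s`
  rw [hD, h₁] at h
  have hs' := cancel_left hQ h
  rw [← hs', ← h₂, hD] at hs
  rw [← cancel_right hQ hs, hk]

theorem conj_square (hQ : IsQuasigroup Q) (hR : RightSemimedial Q) (hD : LeftSemimedial Q)
    {p x q e : Q} (z : Q) (h₁ : p * x = e) (h₂ : x * q = e) : (p * z) * e = e * (z * q) := by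
  obtain ⟨h, hh⟩ := exists_mul_eq' hQ z e
  obtain ⟨v, hv⟩ := exists_mul_eq hQ q (x * z)
  obtain ⟨k, hk⟩ := exists_mul_eq' hQ v e
  have hxk : x * k = p * h := by
    have := mul_mul_of_eq hQ hR hD h₂ hk
    rw [hv, ← mul_mul_of_eq hQ hR hD h₁ hh] at this
    exact cancel_right hQ this
  have hkz : k * z = q * q := by
    apply cancel_right hQ (a := v * z)
    rw [← hR, hk, hD, hv, ← hR, h₂]
  calc (p * z) * e = (p * h) * (z * z) := by rw [hR, hh]
    _ = (x * z) * (q * q) := by rw [← hxk, hR, hkz]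
    _ = e * (z * q) := by rw [hR, h₂]

/-- The medial law with equal outer arguments. -/
theorem outer_medial (hQ : IsQuasigroup Q) (hR : RightSemimedial Q) (hD : LeftSemimedial Q)
    (x p z : Q) : (x * p) * (z * x) = (x * z) * (p * x) := by
  obtain ⟨q, hq⟩ := exists_mul_eq hQ x (p * x)
  obtain ⟨j, hj⟩ := exists_mul_eq hQ x (z * x)
  have h : z * q = p * j := by
    apply cancel_left hQ (a := p * x)
    rw [← conj_square hQ hR hD z rfl hq, ← hD, ← hj, hD]
  rw [← hj, ← hq, ← hD, ← hD, h]

/-! ### Symmetry of the medial relation -/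

theorem medial_iff (hQ : IsQuasigroup Q) (hD : LeftSemimedial Q) {a b c d k s : Q}
    (hk : a * k = c * d) (hs : a * s = b * d) : P a b c d ↔ b * k = c * s := by
  rw [P, ← hk, ← hs, ← hD, ← hD]
  exact ⟨fun h => cancel_left hQ h, fun h => by rw [h]⟩

/-- The medial law at `a, b, c, d` as a Thomsen condition on rows `a, b, t` and
columns `c, d, s`. -/
theorem thomsen_iff (hQ : IsQuasigroup Q) (hR : RightSemimedial Q) (hD : LeftSemimedial Q)
    {a b c d s t : Q} (hs : a * s = b * d) (ht : t * d = a * c) :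
    P a b c d ↔ t * s = b * c := by
  obtain ⟨k, hk⟩ := exists_mul_eq hQ a (c * d)
  have htk : t * k = c * c := by
    obtain ⟨n, hn⟩ := exists_mul_eq hQ t (c * c)
    have := thomsen_square hQ hR hD ht.symm hn
    rw [← hn, cancel_left hQ (hk.trans this.symm)]
  rw [medial_iff hQ hD hk hs]
  constructor
  · intro h
    obtain ⟨s', hs'⟩ := exists_mul_eq hQ t (b * c)
    have := thomsen_square hQ hR hD hs'.symm htk
    rw [cancel_left hQ (h.symm.trans this), hs']
  · intro h
    exact thomsen_square hQ hR hD h.symm htk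

theorem medial_swap_right (hQ : IsQuasigroup Q) (hR : RightSemimedial Q)
    (hD : LeftSemimedial Q) {a b c d : Q} (h : P a b c d) : P a b d c := by
  obtain ⟨s, hs⟩ := exists_mul_eq hQ a (b * d)
  obtain ⟨t, ht⟩ := exists_mul_eq' hQ d (a * c)
  obtain ⟨s', hs'⟩ := exists_mul_eq hQ a (b * c)
  obtain ⟨t', ht'⟩ := exists_mul_eq' hQ c (a * d)
  have hts := (thomsen_iff hQ hR hD hs ht).1 h
  rw [thomsen_iff hQ hR hD hs' ht']
  obtain ⟨p, hp⟩ := exists_mul_eq' hQ a (b * c)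
  obtain ⟨u, hu⟩ := exists_mul_eq' hQ a (a * c)
  obtain ⟨n, hn⟩ := exists_mul_eq hQ t (a * a)
  have hpn : p * n = a * s := thomsen_square hQ hR hD (hp.trans hts.symm) hn
  have hun : u * n = a * d := thomsen_square hQ hR hD (hu.trans ht.symm) hn
  have han : a * n = t' * a := by
    obtain ⟨m, hm⟩ := exists_mul_eq hQ a (t' * a)
    have := (thomsen_iff hQ hR hD hm hu).1 (outer_medial hQ hR hD a t' c)
    rw [← hm, cancel_left hQ (this.trans (ht'.trans hun.symm))]
  have hj : (a * a) * (t' * s') = (a * a) * (p * n) := by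
    rw [hD, hD, hs', han, ← hp]
    exact outer_medial hQ hR hD a t' p
  rw [cancel_left hQ hj, hpn, hs]

theorem isQuasigroup_op (hQ : IsQuasigroup Q) : IsQuasigroup Qᵐᵒᵖ := by
  constructor
  · intro a
    exact MulOpposite.op_bijective.comp ((hQ.2 a.unop).comp MulOpposite.unop_bijective)
  · intro a
    exact MulOpposite.op_bijective.comp ((hQ.1 a.unop).comp MulOpposite.unop_bijective)

/-- The mirror image of `medial_swap_right`, obtained in the opposite quasigroup. -/
theorem medial_swap_left (hQ : IsQuasigroup Q) (hR : RightSemimedial Q)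
    (hD : LeftSemimedial Q) {a b c d : Q} (h : P a b c d) : P b a c d := by
  have hR' : RightSemimedial Qᵐᵒᵖ := fun x y z =>
    MulOpposite.unop_injective (hD x.unop z.unop y.unop)
  have hD' : LeftSemimedial Qᵐᵒᵖ := fun x y z =>
    MulOpposite.unop_injective (hR x.unop z.unop y.unop)
  have h' : P (MulOpposite.op d) (MulOpposite.op c) (MulOpposite.op b) (MulOpposite.op a) :=
    MulOpposite.unop_injective h
  have := medial_swap_right (isQuasigroup_op hQ) hR' hD' h'
  exact congrArg MulOpposite.unop this

/-! ### Closure under multiplication -/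

/-- Left translation as a permutation. -/
noncomputable def leftPerm (hQ : IsQuasigroup Q) (a : Q) : Equiv.Perm Q :=
  Equiv.ofBijective (fun x => a * x) (hQ.1 a)

theorem leftPerm_apply (hQ : IsQuasigroup Q) (a x : Q) : leftPerm hQ a x = a * x := rfl

/-- The permutation `L_x⁻¹ L_{x * x}`. -/
noncomputable def squareShift (hQ : IsQuasigroup Q) (x : Q) : Equiv.Perm Q :=
  (leftPerm hQ x)⁻¹ * leftPerm hQ (x * x)

theorem leftPerm_apply_inv (hQ : IsQuasigroup Q) (a x : Q) :
    leftPerm hQ a ((leftPerm hQ a)⁻¹ x) = x :=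
  (leftPerm hQ a).apply_symm_apply x

theorem leftPerm_inv_apply (hQ : IsQuasigroup Q) (a x : Q) :
    (leftPerm hQ a)⁻¹ (leftPerm hQ a x) = x :=
  (leftPerm hQ a).symm_apply_apply x

/-- `L_u (L_x⁻¹ L_{x * x}) L_u⁻¹` is the same permutation for every `u`. -/
theorem leftPerm_mul_squareShift (hQ : IsQuasigroup Q) (hD : LeftSemimedial Q)
    (hT : CubeIdentity Q) (x u : Q) :
    leftPerm hQ u * squareShift hQ x =
      ((leftPerm hQ (x * x))⁻¹ * leftPerm hQ (x * (x * x))) * leftPerm hQ u := by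
  rw [mul_assoc, eq_inv_mul_iff_mul_eq]
  ext v
  have h : x * squareShift hQ x v = (x * x) * v := by
    rw [← leftPerm_apply hQ, squareShift, Equiv.Perm.mul_apply, leftPerm_apply_inv]
    rfl
  simp only [Equiv.Perm.mul_apply, leftPerm_apply]
  rw [hD, h, hT]

theorem commute_squareShift (hQ : IsQuasigroup Q) (hD : LeftSemimedial Q)
    (hT : CubeIdentity Q) (x u v : Q) :
    Commute (squareShift hQ x) ((leftPerm hQ u)⁻¹ * leftPerm hQ v) := by
  have hu := leftPerm_mul_squareShift hQ hD hT x u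
  have hv := leftPerm_mul_squareShift hQ hD hT x v
  rw [Commute, SemiconjBy, mul_assoc, hv, ← mul_assoc, ← mul_assoc]
  congr 1
  rw [eq_inv_mul_iff_mul_eq, ← mul_assoc, hu, mul_inv_cancel_right]

/-- The permutation whose fixed points are the `d` with `P a b c d`. -/
noncomputable def mediator (hQ : IsQuasigroup Q) (a b c : Q) : Equiv.Perm Q :=
  ((leftPerm hQ b)⁻¹ * leftPerm hQ a) * ((leftPerm hQ c)⁻¹ * leftPerm hQ b) *
    ((leftPerm hQ a)⁻¹ * leftPerm hQ c)

theorem inv_mul_square (hQ : IsQuasigroup Q) (hD : LeftSemimedial Q) (hT : CubeIdentity Q)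
    (x y : Q) : (leftPerm hQ (x * x))⁻¹ * leftPerm hQ (y * y) =
      ((leftPerm hQ x)⁻¹ * leftPerm hQ y) * ((squareShift hQ x)⁻¹ * squareShift hQ y) := by
  have hx : leftPerm hQ (x * x) = leftPerm hQ x * squareShift hQ x := by
    rw [squareShift, mul_inv_cancel_left]
  have hy : leftPerm hQ (y * y) = leftPerm hQ y * squareShift hQ y := by
    rw [squareShift, mul_inv_cancel_left]
  have h := (commute_squareShift hQ hD hT x x y).inv_left.eq
  rw [← mul_assoc _ _ (squareShift hQ y), ← h, hx, hy]
  group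

theorem mediator_square (hQ : IsQuasigroup Q) (hD : LeftSemimedial Q) (hT : CubeIdentity Q)
    (a b c : Q) : mediator hQ (a * a) (b * b) (c * c) = mediator hQ a b c := by
  have hc := commute_squareShift hQ hD hT
  have hcc : ∀ x y, Commute (squareShift hQ x) (squareShift hQ y) := fun x y => hc x y (y * y)
  have hdc : ∀ x y u v, Commute ((squareShift hQ x)⁻¹ * squareShift hQ y)
      ((leftPerm hQ u)⁻¹ * leftPerm hQ v) := fun x y u v =>
    (hc x u v).inv_left.mul_left (hc y u v)
  simp only [mediator, inv_mul_square hQ hD hT]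
  generalize hX : (leftPerm hQ b)⁻¹ * leftPerm hQ a = X
  generalize hY : (leftPerm hQ c)⁻¹ * leftPerm hQ b = Y
  generalize hZ : (leftPerm hQ a)⁻¹ * leftPerm hQ c = Z
  have h₁ := (hdc b a c b).eq
  have h₂ := (hdc b a a c).eq
  have h₃ := (hdc c b a c).eq
  rw [hY] at h₁
  rw [hZ] at h₂ h₃
  have h₄ : ((squareShift hQ b)⁻¹ * squareShift hQ a) * ((squareShift hQ c)⁻¹ * squareShift hQ b) *
      ((squareShift hQ a)⁻¹ * squareShift hQ c) = 1 := by
    have h := ((hcc a c).inv_right.mul_right (hcc a b)).eq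
    rw [mul_assoc (squareShift hQ b)⁻¹, h]
    have h' := (hcc c b).inv_left.eq
    rw [h']
    group
  generalize (squareShift hQ b)⁻¹ * squareShift hQ a = α at *
  generalize (squareShift hQ c)⁻¹ * squareShift hQ b = β at *
  generalize (squareShift hQ a)⁻¹ * squareShift hQ c = γ at *
  calc X * α * (Y * β) * (Z * γ) = X * (α * Y) * (β * Z) * γ := by group
    _ = X * Y * (α * Z) * β * γ := by rw [h₁, h₃]; group
    _ = X * Y * Z * (α * β * γ) := by rw [h₂]; group
    _ = X * Y * Z := by rw [h₄, mul_one]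

theorem leftPerm_inv_mul (hQ : IsQuasigroup Q) (hD : LeftSemimedial Q) (x y u v : Q) :
    ((leftPerm hQ (x * x))⁻¹ * leftPerm hQ (y * y)) (u * v) =
      ((leftPerm hQ x)⁻¹ * leftPerm hQ y) u * ((leftPerm hQ x)⁻¹ * leftPerm hQ y) v := by
  rw [Equiv.Perm.mul_apply, Equiv.Perm.inv_eq_iff_eq, leftPerm_apply, leftPerm_apply, hD, hD]
  simp only [← leftPerm_apply hQ, Equiv.Perm.mul_apply, leftPerm_apply_inv]

theorem mediator_mul (hQ : IsQuasigroup Q) (hD : LeftSemimedial Q) (hT : CubeIdentity Q)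
    (a b c u v : Q) :
    mediator hQ a b c (u * v) = mediator hQ a b c u * mediator hQ a b c v := by
  calc mediator hQ a b c (u * v) = mediator hQ (a * a) (b * b) (c * c) (u * v) := by
        rw [mediator_square hQ hD hT]
    _ = mediator hQ a b c u * mediator hQ a b c v := by
        rw [mediator, Equiv.Perm.mul_apply, leftPerm_inv_mul hQ hD, Equiv.Perm.mul_apply,
          leftPerm_inv_mul hQ hD, leftPerm_inv_mul hQ hD]
        rfl

theorem medial_iff_fixed (hQ : IsQuasigroup Q) (hD : LeftSemimedial Q) (a b c d : Q) :
    P a b c d ↔ mediator hQ a b c d = d := by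
  obtain ⟨k, hk⟩ := exists_mul_eq hQ a (c * d)
  obtain ⟨s, hs⟩ := exists_mul_eq hQ a (b * d)
  have hk' : (leftPerm hQ a)⁻¹ (c * d) = k := by
    rw [Equiv.Perm.inv_eq_iff_eq, leftPerm_apply, hk]
  rw [medial_iff hQ hD hk hs]
  simp only [mediator, Equiv.Perm.mul_apply, leftPerm_apply]
  rw [hk', Equiv.Perm.inv_eq_iff_eq, leftPerm_apply, ← hs]
  constructor
  · intro h
    rw [h, ← leftPerm_apply hQ c, leftPerm_inv_apply]
  · intro h
    rw [← cancel_left hQ h, ← leftPerm_apply hQ c, leftPerm_apply_inv]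

theorem medial_mul (hQ : IsQuasigroup Q) (hD : LeftSemimedial Q) (hT : CubeIdentity Q)
    {a b c d e : Q} (hd : P a b c d) (he : P a b c e) : P a b c (d * e) := by
  rw [medial_iff_fixed hQ hD] at *
  rw [mediator_mul hQ hD hT, hd, he]

/-! ### Passage to the closure -/

theorem isTrimedial (hQ : IsQuasigroup Q) (hR : RightSemimedial Q) (hT : CubeIdentity Q) :
    IsTrimedial Q := by
  have hD := left_semimedial hQ hR hT
  have hC := outer_medial hQ hR hD
  intro a b c
  -- swaps of adjacent arguments of `P`
  have s₁ : ∀ {w x y z : Q}, P w x y z → P x w y z := medial_swap_left hQ hR hD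
  have s₂ : ∀ {w x y z : Q}, P w x y z → P w y x z := Eq.symm
  have s₃ : ∀ {w x y z : Q}, P w x y z → P w x z y := medial_swap_right hQ hR hD
  have ext : ∀ w x y : Q, (∀ g ∈ ({a, b, c} : Set Q), P w x y g) →
      ∀ z ∈ Subsemigroup.closure {a, b, c}, P w x y z := by
    intro w x y h z hz
    induction hz using Subsemigroup.closure_induction with
    | mem g hg => exact h g hg
    | mul u v _ _ hu hv => exact medial_mul hQ hD hT hu hv
  have h₀ : ∀ w ∈ ({a, b, c} : Set Q), ∀ x ∈ ({a, b, c} : Set Q), ∀ y ∈ ({a, b, c} : Set Q),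
      ∀ z ∈ ({a, b, c} : Set Q), P w x y z := by
    have e₁ : ∀ x y z : Q, P x x y z := fun x y z => hD x y z
    rintro w (rfl | rfl | rfl) x (rfl | rfl | rfl) y (rfl | rfl | rfl) z (rfl | rfl | rfl) <;>
    first
    | exact e₁ _ _ _
    | exact s₂ (e₁ _ _ _)
    | exact rfl
    | exact hR _ _ _
    | exact s₂ (hR _ _ _)
    | exact hC _ _ _
  have h₁ : ∀ w ∈ ({a, b, c} : Set Q), ∀ x ∈ ({a, b, c} : Set Q), ∀ y ∈ ({a, b, c} : Set Q),
      ∀ z ∈ Subsemigroup.closure {a, b, c}, P w x y z := fun w hw x hx y hy =>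
    ext w x y (h₀ w hw x hx y hy)
  have h₂ : ∀ w ∈ ({a, b, c} : Set Q), ∀ x ∈ ({a, b, c} : Set Q),
      ∀ y ∈ Subsemigroup.closure {a, b, c}, ∀ z ∈ Subsemigroup.closure {a, b, c}, P w x y z :=
    fun w hw x hx y hy => ext w x y fun g hg => s₃ (h₁ w hw x hx g hg y hy)
  have h₃ : ∀ w ∈ ({a, b, c} : Set Q), ∀ x ∈ Subsemigroup.closure {a, b, c},
      ∀ y ∈ Subsemigroup.closure {a, b, c}, ∀ z ∈ Subsemigroup.closure {a, b, c}, P w x y z :=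
    fun w hw x hx y hy => ext w x y fun g hg => s₃ (s₂ (h₂ w hw g hg x hx y hy))
  intro w x y z hw hx hy hz
  exact ext w x y (fun g hg => s₃ (s₂ (s₁ (h₃ g hg w hw x hx y hy)))) z hz

end Trimedial

theorem stmt_2 {Q : Type*} [Mul Q] (hQ : IsQuasigroup Q) :
    IsTrimedial Q ↔
      ((∀ x y z : Q, (y * z) * (x * x) = (y * x) * (z * x)) ∧
       (∀ x u v : Q, (x * (x * x)) * (u * v) = (x * u) * ((x * x) * v))) := by
  constructor
  · intro h
    have mem : ∀ a b c : Q, a ∈ Subsemigroup.closure {a, b, c} ∧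
        b ∈ Subsemigroup.closure {a, b, c} ∧ c ∈ Subsemigroup.closure {a, b, c} := fun a b c =>
      ⟨Subsemigroup.subset_closure (by simp), Subsemigroup.subset_closure (by simp),
        Subsemigroup.subset_closure (by simp)⟩
    refine ⟨fun x y z => ?_, fun x u v => ?_⟩
    · obtain ⟨hx, hy, hz⟩ := mem x y z
      exact h x y z y z x x hy hz hx hx
    · obtain ⟨hx, hu, hv⟩ := mem x u v
      exact h x u v x (x * x) u v hx (mul_mem hx hx) hu hv
  · rintro ⟨hR, hT⟩
    exact Trimedial.isTrimedial hQ hR hT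
end
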